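/- arXiv:1602.02206 — 6 statements merged into one kernel-verified Lean document; each statement's English description precedes it below -/
import Mathlib

section
/- Let P > 0 and c > 0 be real numbers and define, for α ∈ [0,1], g(α) = (1/2)·log₂(1 + αP/(1 + (1−α)P + c²)) + (1/4)·log₂(1 + (1−α)P). Then: (i) if c² ≤ 1, the maximum of g over [0,1] is attained at α = 1 and equals (1/2)·log₂(1 + P/(1 + c²)); (ii) if 1 ≤ c² ≤ P + 1, the maximum is attained at α = 1 − (c²−1)/P and equals (1/2)·log₂(1 + c² + P) − (1/4)·log₂(c²) − 1/2; (iii) if c² ≥ P + 1, the maximum is attained at α = 0 and equals (1/4)·log₂(1 + P). -/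
/-!
With `u = 1 + (1 - α) P`, which runs over `[1, 1 + P]`, and `d = c ^ 2`, the rate becomes
`g α = (1/2) log₂ (1 + P + d) + (1/4) log₂ (u / (u + d) ^ 2)` (`rate_eq`), so maximizing `g` amounts
to maximizing `u / (u + d) ^ 2`. The identity
`v (u + d) ^ 2 - u (v + d) ^ 2 = (u - v) (u v - d ^ 2)` (`rate_le`) shows that the maximizer is the
point of `[1, 1 + P]` nearest to `d`; the three cases are `d` to the left of, inside and to the
right of this interval.
-/

lemma rate_eq (P d α : ℝ) (hP : 0 < P) (hd : 0 < d) (hα : α ∈ Set.Icc (0 : ℝ) 1) :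
    (1 / 2) * Real.logb 2 (1 + α * P / (1 + (1 - α) * P + d)) +
        (1 / 4) * Real.logb 2 (1 + (1 - α) * P) =
      (1 / 2) * Real.logb 2 (1 + P + d) +
        (1 / 4) * Real.logb 2 ((1 + (1 - α) * P) / (1 + (1 - α) * P + d) ^ 2) := by
  have h : 0 ≤ (1 - α) * P := mul_nonneg (by linarith [hα.2]) hP.le
  have hu : 1 + (1 - α) * P ≠ 0 := by positivity
  have hud : 1 + (1 - α) * P + d ≠ 0 := by positivity
  have e : 1 + α * P / (1 + (1 - α) * P + d) = (1 + P + d) / (1 + (1 - α) * P + d) := by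
    rw [eq_div_iff hud, add_mul, div_mul_cancel₀ _ hud]
    ring
  rw [e, Real.logb_div (by positivity) hud, Real.logb_div hu (pow_ne_zero 2 hud), Real.logb_pow]
  push_cast
  ring

/-- The rate at `α` is at most the rate at `β` as soon as `(u - v) (u v - d ^ 2) ≥ 0`, where
`u = 1 + (1 - α) P` and `v = 1 + (1 - β) P`. -/
lemma rate_le (P d α β : ℝ) (hP : 0 < P) (hd : 0 < d) (hα : α ∈ Set.Icc (0 : ℝ) 1)
    (hβ : β ∈ Set.Icc (0 : ℝ) 1)
    (h : 0 ≤ ((1 + (1 - α) * P) - (1 + (1 - β) * P)) *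
      ((1 + (1 - α) * P) * (1 + (1 - β) * P) - d ^ 2)) :
    (1 / 2) * Real.logb 2 (1 + α * P / (1 + (1 - α) * P + d)) +
        (1 / 4) * Real.logb 2 (1 + (1 - α) * P) ≤
      (1 / 2) * Real.logb 2 (1 + β * P / (1 + (1 - β) * P + d)) +
        (1 / 4) * Real.logb 2 (1 + (1 - β) * P) := by
  rw [rate_eq P d α hP hd hα, rate_eq P d β hP hd hβ]
  have h1 : 0 ≤ (1 - α) * P := mul_nonneg (by linarith [hα.2]) hP.le
  have h2 : 0 ≤ (1 - β) * P := mul_nonneg (by linarith [hβ.2]) hP.le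
  generalize (1 - α) * P = x at *
  generalize (1 - β) * P = y at *
  have key : (1 + x) / (1 + x + d) ^ 2 ≤ (1 + y) / (1 + y + d) ^ 2 := by
    rw [div_le_div_iff₀ (by positivity) (by positivity)]
    linarith
  have := Real.logb_le_logb_of_le (b := 2) (by norm_num) (by positivity) key
  linarith

theorem stmt_8 (P c : ℝ) (hP : 0 < P) (hc : 0 < c) :
    let g : ℝ → ℝ := fun α =>
      (1 / 2) * Real.logb 2 (1 + α * P / (1 + (1 - α) * P + c ^ 2)) +
        (1 / 4) * Real.logb 2 (1 + (1 - α) * P)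
    (c ^ 2 ≤ 1 →
      (∀ α ∈ Set.Icc (0 : ℝ) 1, g α ≤ g 1) ∧
      g 1 = (1 / 2) * Real.logb 2 (1 + P / (1 + c ^ 2))) ∧
    (1 ≤ c ^ 2 → c ^ 2 ≤ P + 1 →
      (1 - (c ^ 2 - 1) / P) ∈ Set.Icc (0 : ℝ) 1 ∧
      (∀ α ∈ Set.Icc (0 : ℝ) 1, g α ≤ g (1 - (c ^ 2 - 1) / P)) ∧
      g (1 - (c ^ 2 - 1) / P) =
        (1 / 2) * Real.logb 2 (1 + c ^ 2 + P) - (1 / 4) * Real.logb 2 (c ^ 2) - 1 / 2) ∧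
    (P + 1 ≤ c ^ 2 →
      (∀ α ∈ Set.Icc (0 : ℝ) 1, g α ≤ g 0) ∧
      g 0 = (1 / 4) * Real.logb 2 (1 + P)) := by
  intro g
  have hd : 0 < c ^ 2 := by positivity
  simp only [g]
  generalize c ^ 2 = d at *
  refine ⟨fun h1 => ⟨fun α hα => ?_, by simp⟩, fun h1 h2 => ?_,
    fun h1 => ⟨fun α hα => ?_, by simp⟩⟩
  · have h : 0 ≤ (1 - α) * P := mul_nonneg (by linarith [hα.2]) hP.le
    exact rate_le P d α 1 hP hd hα (by simp)
      (mul_nonneg (by linarith) (by nlinarith))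
  · have hmem : (1 - (d - 1) / P) ∈ Set.Icc (0 : ℝ) 1 := by
      have h3 : (d - 1) / P ≤ 1 := (div_le_one hP).2 (by linarith)
      have h4 : 0 ≤ (d - 1) / P := div_nonneg (by linarith) hP.le
      constructor <;> linarith
    have e : 1 + (1 - (1 - (d - 1) / P)) * P = d := by
      field_simp
      ring
    refine ⟨hmem, fun α hα => rate_le P d α _ hP hd hα hmem ?_, ?_⟩
    · rw [e]
      -- here `v = d`, and the product is `d (u - d) ^ 2`
      nlinarith [mul_nonneg hd.le (sq_nonneg (1 + (1 - α) * P - d))]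
    · rw [rate_eq P d _ hP hd hmem, e]
      have e2 : d / (d + d) ^ 2 = (2 ^ 2 * d)⁻¹ := by
        field_simp
        ring
      rw [e2, Real.logb_inv, Real.logb_mul (by norm_num) hd.ne', Real.logb_pow,
        Real.logb_self_eq_one (by norm_num), show 1 + P + d = 1 + d + P by ring]
      push_cast
      ring
  · have h : 0 ≤ (1 - α) * P := mul_nonneg (by linarith [hα.2]) hP.le
    have h' : 0 ≤ α * P := mul_nonneg hα.1 hP.le
    exact rate_le P d α 0 hP hd hα (by simp)
      (mul_nonneg_of_nonpos_of_nonpos (by linarith) (by nlinarith))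
end

section
/- Let M ≥ 2 be an integer and P > 0, c > 0 real numbers with M − 1 ≤ c² ≤ (M−1)(P+1). Define, for β ∈ [0,1], g_M(β) = (1/2)·log₂(1 + (1−β)P/(1 + βP + c²)) + (1/(2M))·log₂(1 + βP). Then β* = (c² + 1 − M)/((M−1)·P) lies in [0,1], g_M attains its maximum over [0,1] at β*, the maximum value equals (1/2)·log₂((M−1)(1 + P + c²)/(M·c²)) + (1/(2M))·log₂(c²/(M−1)), and this value is at least (1/2)·log₂(1 + P + c²) − ((M−1)/(2M))·log₂(c²) − 1/2. -/
/-!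
Put `s = c²` and `x = 1 + βP`. The argument of the first logarithm is `(1 + P + s) / (x + s)`, so
`g` is a constant plus `(log x - M log (x + s)) / (2M)`, to be maximised at `y = s / (M - 1)`.
With `t = (x + s) / (y + s)` one has `x / y = 1 + M (t - 1)`, so maximality of `y` is exactly
Bernoulli's inequality `1 + M (t - 1) ≤ t ^ M`. The final lower bound is equivalent to
`M log M - (M - 1) log (M - 1) ≤ M log 2`: the binary entropy of `1 / M` is at most one bit.
-/

/-- The function `x ↦ log x - M log (x + s)` is maximal at `y = s / (M - 1)`; the hypothesis `hy`
is the critical point equation. -/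
lemma log_sub_mul_log_le (M : ℕ) {s x y : ℝ} (hs : 0 < s) (hx : 0 < x) (hy0 : 0 < y)
    (hy : ((M : ℝ) - 1) * y = s) :
    Real.log x - M * Real.log (x + s) ≤ Real.log y - M * Real.log (y + s) := by
  have hxs : 0 < x + s := by positivity
  have hys : 0 < y + s := by positivity
  have hb : 1 + (M : ℝ) * ((x + s) / (y + s) - 1) ≤ ((x + s) / (y + s)) ^ M := by
    have h : -2 ≤ (x + s) / (y + s) - 1 := by
      have : 0 < (x + s) / (y + s) := by positivity
      linarith
    simpa using one_add_mul_le_pow h M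
  have he : 1 + (M : ℝ) * ((x + s) / (y + s) - 1) = x / y := by
    field_simp
    linear_combination (x - y) * hy
  rw [he] at hb
  have hl := Real.log_le_log (by positivity) hb
  rw [Real.log_pow, Real.log_div hx.ne' hy0.ne', Real.log_div hxs.ne' hys.ne'] at hl
  linarith

/-- The binary entropy of `1 / m` is at most `log 2`, with denominators cleared. -/
lemma mul_log_sub_le {m : ℝ} (hm : 1 < m) :
    m * Real.log m - (m - 1) * Real.log (m - 1) ≤ m * Real.log 2 := by
  have hm0 : 0 < m := by linarith
  have hn : 0 < m - 1 := by linarith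
  have a := Real.log_le_sub_one_of_pos (show 0 < m / 2 by positivity)
  have b := mul_le_mul_of_nonneg_left
    (Real.log_le_sub_one_of_pos (show 0 < m / (2 * (m - 1)) by positivity)) hn.le
  have e : (m - 1) * (m / (2 * (m - 1)) - 1) = m / 2 - (m - 1) := by
    field_simp
  rw [e, Real.log_div hm0.ne' (by positivity), Real.log_mul two_ne_zero hn.ne'] at b
  rw [Real.log_div hm0.ne' two_ne_zero] at a
  linarith

theorem stmt_9 (M : ℕ) (hM : 2 ≤ M) (P c : ℝ) (hP : 0 < P) (hc : 0 < c)
    (h1 : (M : ℝ) - 1 ≤ c ^ 2) (h2 : c ^ 2 ≤ ((M : ℝ) - 1) * (P + 1)) :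
    let g : ℝ → ℝ := fun β =>
      (1 / 2) * Real.logb 2 (1 + (1 - β) * P / (1 + β * P + c ^ 2)) +
        (1 / (2 * M)) * Real.logb 2 (1 + β * P)
    let βstar : ℝ := (c ^ 2 + 1 - M) / (((M : ℝ) - 1) * P)
    βstar ∈ Set.Icc (0 : ℝ) 1 ∧
    (∀ β ∈ Set.Icc (0 : ℝ) 1, g β ≤ g βstar) ∧
    g βstar =
      (1 / 2) * Real.logb 2 (((M : ℝ) - 1) * (1 + P + c ^ 2) / (M * c ^ 2)) +
        (1 / (2 * M)) * Real.logb 2 (c ^ 2 / ((M : ℝ) - 1)) ∧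
    (1 / 2) * Real.logb 2 (1 + P + c ^ 2) -
        (((M : ℝ) - 1) / (2 * M)) * Real.logb 2 (c ^ 2) - 1 / 2 ≤ g βstar := by
  intro g βstar
  have hM2 : (2 : ℝ) ≤ M := by exact_mod_cast hM
  have hM0 : (0 : ℝ) < M := by linarith
  have hn : (0 : ℝ) < (M : ℝ) - 1 := by linarith
  have hs : 0 < c ^ 2 := by positivity
  have hA : 0 < 1 + P + c ^ 2 := by positivity
  have hl2 : 0 < Real.log 2 := Real.log_pos one_lt_two
  have hmem : βstar ∈ Set.Icc (0 : ℝ) 1 := by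
    constructor
    · exact div_nonneg (by linarith) (by positivity)
    · exact (div_le_one (by positivity)).2 (by linarith)
  have hstar : 1 + βstar * P = c ^ 2 / ((M : ℝ) - 1) := by
    simp only [βstar]
    field_simp
    ring
  have hsum : c ^ 2 / ((M : ℝ) - 1) + c ^ 2 = M * c ^ 2 / ((M : ℝ) - 1) := by
    field_simp
    ring
  have harg : ∀ β : ℝ, 0 ≤ β →
      1 + (1 - β) * P / (1 + β * P + c ^ 2) = (1 + P + c ^ 2) / (1 + β * P + c ^ 2) := by
    intro β hβ
    have : 0 < 1 + β * P + c ^ 2 := by positivity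
    field_simp
    ring
  have hg : ∀ β : ℝ, 0 ≤ β → g β = (M * Real.log (1 + P + c ^ 2) +
      (Real.log (1 + β * P) - M * Real.log (1 + β * P + c ^ 2))) / (2 * M * Real.log 2) := by
    intro β hβ
    have : 0 < 1 + β * P + c ^ 2 := by positivity
    simp only [g]
    rw [harg β hβ, Real.logb, Real.logb, Real.log_div hA.ne' this.ne']
    field_simp
    ring
  have hval : g βstar =
      (1 / 2) * Real.logb 2 (((M : ℝ) - 1) * (1 + P + c ^ 2) / (M * c ^ 2)) +
        (1 / (2 * M)) * Real.logb 2 (c ^ 2 / ((M : ℝ) - 1)) := by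
    simp only [g]
    rw [harg βstar hmem.1, hstar, hsum]
    congr 3
    field_simp
  refine ⟨hmem, ?_, hval, ?_⟩
  · intro β hβ
    rw [hg β hβ.1, hg βstar hmem.1, hstar]
    have hx : 0 < 1 + β * P := by
      have := mul_nonneg hβ.1 hP.le
      linarith
    have := log_sub_mul_log_le M hs hx (div_pos hs hn) (mul_div_cancel₀ _ hn.ne')
    gcongr
  · have hent := mul_log_sub_le (show (1 : ℝ) < M by linarith)
    rw [hval, Real.logb, Real.logb, Real.logb, Real.logb,
      Real.log_div (by positivity) (by positivity), Real.log_mul hn.ne' hA.ne',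
      Real.log_mul hM0.ne' hs.ne', Real.log_div hs.ne' hn.ne']
    -- The two sides differ by the slack in the entropy bound, divided by `2 M log 2`.
    have hd : 0 ≤ (M * Real.log 2 - (M * Real.log M - ((M : ℝ) - 1) * Real.log ((M : ℝ) - 1)))
        / (2 * M * Real.log 2) := div_nonneg (by linarith) (by positivity)
    rw [← sub_nonneg]
    convert hd using 1
    field_simp
    ring
end

section
/- Let M ≥ 2 be an integer and P > 0, c > 0 real numbers, and define g_M on [0,1] by g_M(β) = (1/2)·log₂(1 + (1−β)P/(1 + βP + c²)) + (1/(2M))·log₂(1 + βP). Then: (i) if c² ≤ M − 1, the maximum of g_M over [0,1] is attained at β = 0 and equals (1/2)·log₂(1 + P/(1 + c²)); (ii) if c² ≥ (M−1)(P+1), the maximum is attained at β = 1 and equals (1/(2M))·log₂(1 + P). -/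
/-!
With `x = β P` and `s = c²`, twice `g β` is `logb 2 (1+P+s) - logb 2 (1+x+s) + logb 2 (1+x) / M`.
So `g β ≤ g β₀` amounts to `b / a ≤ ((b+s) / (a+s)) ^ M` with `b = 1 + β P`, `a = 1 + β₀ P`.
Bernoulli's inequality bounds the right-hand side below by `1 + M (b-a) / (a+s)`, and this is
at least `1 + (b-a) / a` when `(b-a) (a+s) ≤ M a (b-a)`. At `a = 1` (where `b ≥ a`) that
condition is `1 + s ≤ M`; at `a = 1 + P` (where `b ≤ a`) it is `M (1+P) ≤ 1 + P + s`.
-/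

/-- Comparison of logarithmic increments, via Bernoulli's inequality for
`(b+s) / (a+s) = 1 + (b-a) / (a+s)`. -/
lemma logb_increment_le (M : ℕ) {a b s : ℝ} (ha : 0 < a) (hb : 0 < b) (hs : 0 ≤ s)
    (h : (b - a) * (a + s) ≤ M * a * (b - a)) :
    Real.logb 2 b - Real.logb 2 a ≤ M * (Real.logb 2 (b + s) - Real.logb 2 (a + s)) := by
  have has : 0 < a + s := by linarith
  have hbs : 0 < b + s := by linarith
  have hq : (b + s) / (a + s) = 1 + (b - a) / (a + s) := by field_simp; ring
  have hbern := one_add_mul_le_pow (a := (b - a) / (a + s))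
    (by have : 0 < (b + s) / (a + s) := by positivity
        linarith) M
  have hlin : b / a ≤ 1 + M * ((b - a) / (a + s)) := by
    have h1 : (b - a) / a ≤ M * (b - a) / (a + s) := by
      rw [div_le_div_iff₀ ha has]
      linarith
    have h2 : b / a = 1 + (b - a) / a := by field_simp; ring
    rw [h2, ← mul_div_assoc]
    linarith
  rw [← Real.logb_div hb.ne' ha.ne', ← Real.logb_div hbs.ne' has.ne', ← Real.logb_pow]
  refine Real.logb_le_logb_of_le (by norm_num) (by positivity) ?_
  rw [hq]
  exact hlin.trans hbern

theorem stmt_10 (M : ℕ) (hM : 2 ≤ M) (P c : ℝ) (hP : 0 < P) (hc : 0 < c) :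
    let g : ℝ → ℝ := fun β =>
      (1 / 2) * Real.logb 2 (1 + (1 - β) * P / (1 + β * P + c ^ 2)) +
        (1 / (2 * M)) * Real.logb 2 (1 + β * P)
    (c ^ 2 ≤ (M : ℝ) - 1 →
      (∀ β ∈ Set.Icc (0 : ℝ) 1, g β ≤ g 0) ∧
      g 0 = (1 / 2) * Real.logb 2 (1 + P / (1 + c ^ 2))) ∧
    (((M : ℝ) - 1) * (P + 1) ≤ c ^ 2 →
      (∀ β ∈ Set.Icc (0 : ℝ) 1, g β ≤ g 1) ∧
      g 1 = (1 / (2 * M)) * Real.logb 2 (1 + P)) := by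
  intro g
  have hM0 : (0 : ℝ) < M := by exact_mod_cast (by omega : 0 < M)
  have hs : 0 ≤ c ^ 2 := sq_nonneg c
  have hg : ∀ β ∈ Set.Icc (0 : ℝ) 1, g β =
      (1 / 2) * (Real.logb 2 (1 + P + c ^ 2) - Real.logb 2 (1 + β * P + c ^ 2)) +
        (1 / (2 * M)) * Real.logb 2 (1 + β * P) := by
    intro β hβ
    have hx : 0 ≤ β * P := mul_nonneg hβ.1 hP.le
    have hd : 0 < 1 + β * P + c ^ 2 := by linarith
    have hn : 0 < 1 + P + c ^ 2 := by linarith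
    have he : 1 + (1 - β) * P / (1 + β * P + c ^ 2) =
        (1 + P + c ^ 2) / (1 + β * P + c ^ 2) := by
      field_simp
      ring
    simp only [g]
    rw [he, Real.logb_div hn.ne' hd.ne']
  have key : ∀ β ∈ Set.Icc (0 : ℝ) 1, ∀ β₀ ∈ Set.Icc (0 : ℝ) 1,
      (β - β₀) * P * (1 + β₀ * P + c ^ 2) ≤ M * (1 + β₀ * P) * ((β - β₀) * P) →
      g β ≤ g β₀ := by
    intro β hβ β₀ hβ₀ h
    have hx : 0 ≤ β * P := mul_nonneg hβ.1 hP.le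
    have hx₀ : 0 ≤ β₀ * P := mul_nonneg hβ₀.1 hP.le
    have hlog := logb_increment_le M (a := 1 + β₀ * P) (b := 1 + β * P) (s := c ^ 2)
      (by linarith) (by linarith) hs (by
        have e : 1 + β * P - (1 + β₀ * P) = (β - β₀) * P := by ring
        rw [e]
        exact h)
    rw [hg β hβ, hg β₀ hβ₀]
    have hmul := mul_le_mul_of_nonneg_left hlog (by positivity : (0 : ℝ) ≤ 1 / (2 * M))
    have e : (1 / (2 * M) : ℝ) * (M * (Real.logb 2 (1 + β * P + c ^ 2) -
        Real.logb 2 (1 + β₀ * P + c ^ 2))) = (1 / 2) * (Real.logb 2 (1 + β * P + c ^ 2) -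
        Real.logb 2 (1 + β₀ * P + c ^ 2)) := by
      field_simp
    rw [e] at hmul
    linarith
  refine ⟨fun h => ⟨fun β hβ => key β hβ 0 (by simp) ?_, by simp [g]⟩,
    fun h => ⟨fun β hβ => key β hβ 1 (by simp) ?_, by simp [g]⟩⟩
  · have hx : 0 ≤ β * P := mul_nonneg hβ.1 hP.le
    nlinarith [mul_nonneg hx (sub_nonneg.2 h)]
  · have hx : 0 ≤ (1 - β) * P := mul_nonneg (sub_nonneg.2 hβ.2) hP.le
    nlinarith [mul_nonneg hx (sub_nonneg.2 h)]
end

section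
/- Let M ≥ 2 be an integer, P ≥ 0 a real number, and x a real number with 1 < x ≤ M − 1. Then (1/2)·log₂(1 + P + x) − ((M−1)/(2M))·log₂(x) + 3/2 ≤ (1/2)·log₂(1 + P/(1 + x)) + 9/4. -/
/-!
Since `1 + P / (1 + x) = (1 + P + x) / (1 + x)`, the dependence on `P` cancels and the claim
becomes `log₂ (1 + x) - (1 - 1 / M) * log₂ x ≤ 3 / 2`. As `1 / M ≤ 1 / (1 + x)` and `log₂ x ≥ 0`,
the left side is at most `log₂ (1 + x) - x / (1 + x) * log₂ x`, which is the binary entropy of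
`1 / (1 + x)` in bits, hence at most `1`.
-/

/-- The left side is the binary entropy (in nats) of `(1 + x)⁻¹`. -/
lemma log_one_add_sub_le {x : ℝ} (hx : 0 < x) :
    Real.log (1 + x) - x / (1 + x) * Real.log x ≤ Real.log 2 := by
  have h := Real.binEntropy_le_log_two (p := (1 + x)⁻¹)
  have h1 : 1 - (1 + x)⁻¹ = x / (1 + x) := by field_simp; ring
  rw [Real.binEntropy, h1, inv_inv, Real.log_inv, Real.log_div (by positivity) (by positivity)] at h
  have h2 : (1 + x)⁻¹ = 1 - x / (1 + x) := by field_simp; ring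
  rw [h2] at h
  linarith

theorem stmt_13 (M : ℕ) (hM : 2 ≤ M) (P x : ℝ) (hP : 0 ≤ P)
    (hx1 : 1 < x) (hx2 : x ≤ (M : ℝ) - 1) :
    (1 / 2) * Real.logb 2 (1 + P + x) - (((M : ℝ) - 1) / (2 * M)) * Real.logb 2 x + 3 / 2 ≤
      (1 / 2) * Real.logb 2 (1 + P / (1 + x)) + 9 / 4 := by
  have hx0 : 0 < x := by linarith
  have hM0 : (0 : ℝ) < M := by linarith
  have e : 1 + P / (1 + x) = (1 + P + x) / (1 + x) := by field_simp; ring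
  rw [e, Real.logb_div (by positivity) (by positivity)]
  have hL : 0 ≤ Real.logb 2 x := Real.logb_nonneg (by norm_num) hx1.le
  have hent : Real.logb 2 (1 + x) - x / (1 + x) * Real.logb 2 x ≤ 1 := by
    have h2 : 0 < Real.log 2 := Real.log_pos (by norm_num)
    have h := (div_le_one h2).2 (log_one_add_sub_le hx0)
    rwa [sub_div, mul_div_assoc] at h
  have hc : x / (1 + x) / 2 ≤ ((M : ℝ) - 1) / (2 * M) := by
    rw [div_div, div_le_div_iff₀ (by positivity) (by positivity)]
    nlinarith
  have := mul_le_mul_of_nonneg_right hc hL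
  linarith
end

section
/- For all real numbers P > 0 and c > 0, define R_OUT(P,c) = (1/2)·log₂(P+1) if c² ≤ 1; R_OUT(P,c) = (1/2)·log₂(P + c² + 1) − (1/4)·log₂(c² + 1) + 1/2 if 1 < c² < P + 1; and R_OUT(P,c) = (1/4)·log₂(P+1) + 1 if c² ≥ P + 1. Define R_IN(P,c) = (1/2)·log₂(1 + P/(c² + 1)) if c² ≤ 1; R_IN(P,c) = (1/2)·log₂(1 + c² + P) − (1/4)·log₂(c²) − 1/2 if 1 < c² < P + 1; and R_IN(P,c) = (1/4)·log₂(P + 1) if c² ≥ P + 1. Then R_OUT(P,c) − R_IN(P,c) ≤ 1 for all P > 0 and c > 0. -/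
/-!
The two rates are compared regime by regime, using only that `logb 2` is increasing. For weak states
(`c ^ 2 ≤ 1`) treating the state as noise costs at most half a bit; for intermediate states the
`P`-dependent terms cancel and the gap is 1 minus a nonnegative difference of logarithms; for strong
states the gap is exactly 1.
-/

/-- Capacity outer bound for the two-user CCDP channel with independent,
unit-variance Gaussian states, transmit power `P` and state gain `c`. -/
noncomputable def ROUT (P c : ℝ) : ℝ :=
  if c ^ 2 ≤ 1 then (1 / 2) * Real.logb 2 (P + 1)
  else if c ^ 2 < P + 1 then
    (1 / 2) * Real.logb 2 (P + c ^ 2 + 1) - (1 / 4) * Real.logb 2 (c ^ 2 + 1) + 1 / 2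
  else (1 / 4) * Real.logb 2 (P + 1) + 1

/-- Achievable rate (inner bound) for the two-user CCDP channel with independent,
unit-variance Gaussian states, transmit power `P` and state gain `c`. -/
noncomputable def RIN (P c : ℝ) : ℝ :=
  if c ^ 2 ≤ 1 then (1 / 2) * Real.logb 2 (1 + P / (c ^ 2 + 1))
  else if c ^ 2 < P + 1 then
    (1 / 2) * Real.logb 2 (1 + c ^ 2 + P) - (1 / 4) * Real.logb 2 (c ^ 2) - 1 / 2
  else (1 / 4) * Real.logb 2 (P + 1)

theorem stmt_15 (P c : ℝ) (hP : 0 < P) (hc : 0 < c) :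
    ROUT P c - RIN P c ≤ 1 := by
  unfold ROUT RIN
  have hc2 : 0 < c ^ 2 := by positivity
  split_ifs with h1 h2
  -- since `c ^ 2 + 1 ≤ 2`, the inner bound loses at most a factor 2 inside the logarithm
  · have hle : P + 1 ≤ 2 * (1 + P / (c ^ 2 + 1)) := by
      have : P / 2 ≤ P / (c ^ 2 + 1) :=
        div_le_div_of_nonneg_left hP.le (by positivity) (by linarith)
      linarith
    have hlog : Real.logb 2 (P + 1) ≤ 1 + Real.logb 2 (1 + P / (c ^ 2 + 1)) := by
      calc Real.logb 2 (P + 1) ≤ Real.logb 2 (2 * (1 + P / (c ^ 2 + 1))) :=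
            Real.logb_le_logb_of_le (by norm_num) (by positivity) hle
        _ = 1 + Real.logb 2 (1 + P / (c ^ 2 + 1)) := by
            rw [Real.logb_mul (by norm_num) (by positivity),
              Real.logb_self_eq_one (by norm_num)]
    linarith
  -- the gap is `1 - (logb 2 (c ^ 2 + 1) - logb 2 (c ^ 2)) / 4`
  · have hlog : Real.logb 2 (c ^ 2) ≤ Real.logb 2 (c ^ 2 + 1) :=
      Real.logb_le_logb_of_le (by norm_num) hc2 (by linarith)
    rw [show 1 + c ^ 2 + P = P + c ^ 2 + 1 by ring]
    linarith
  · linarith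
end

section
/- Let M ≥ 2 be an integer and P ≥ 0, c real numbers with c² ≥ 1. Define, for β ∈ [0,1], g_M(β) = (1/2)·log₂(1 + (1−β)P/(1 + βP + c²)) + (1/(2M))·log₂(1 + βP), and define h_M(x) = (1/2)·log₂(1 + P + x) − ((M−1)/(2M))·log₂(x) for x > 0. Then there exists β ∈ [0,1] such that g_M(β) ≥ (min over x ∈ [1, c²] of h_M(x)) + 3/2 − 9/4; that is, the optimized M-user outer bound exceeds the best achievable rate of the superposition scheme by at most 9/4 bits-per-channel-use. -/
/-!
Write `u = 1 + βP`. Twice the achievable rate is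
`log₂ (1 + P + c²) - log₂ (u + c²) + (1/M) log₂ u`, which over all `u > 0` is maximal at
`u = c²/(M - 1)`, while `h` is minimal over all `x > 0` at `x = (M - 1)(1 + P)`. Clipping both points
to their ranges `[1, 1 + P]` and `[1, c²]` gives three cases. In each of them the gap `2(h - g)` is
`log₂ ((1 + t)/t) + (1/M) log₂ t`, with `t = c²` if `c² < M - 1` and `t = M - 1` otherwise. As
`1 ≤ t ≤ M - 1`, this is at most the binary entropy of `1/(1 + t)`, so at most one bit
(`gap_le_log_two`). Hence even `sInf h - 1/2 ≤ g β` holds for the chosen `β`, which is stronger than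
what is claimed.
-/

/-- The gap between outer and inner bound, in nats: increasing `1 / m` to `1 / (1 + t)` turns the
left-hand side into the binary entropy of `1 / (1 + t)`. -/
lemma gap_le_log_two {t m : ℝ} (ht : 1 ≤ t) (hm : 1 + t ≤ m) :
    Real.log (1 + t) - Real.log t + 1 / m * Real.log t ≤ Real.log 2 := by
  have h0 : 0 < t := by linarith
  have h1 : 0 < 1 + t := by linarith
  have hent := Real.binEntropy_le_log_two (p := 1 / (1 + t))
  have hq : 1 - 1 / (1 + t) = t / (1 + t) := by field_simp; ring
  have hval : Real.binEntropy (1 / (1 + t)) =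
      Real.log (1 + t) - Real.log t + 1 / (1 + t) * Real.log t := by
    rw [Real.binEntropy, hq, inv_div, inv_div, div_one, Real.log_div h1.ne' h0.ne']
    field_simp
    ring
  have hmono : 1 / m * Real.log t ≤ 1 / (1 + t) * Real.log t :=
    mul_le_mul_of_nonneg_right (one_div_le_one_div_of_le h1 hm) (Real.log_nonneg ht)
  linarith

theorem stmt_16 (M : ℕ) (hM : 2 ≤ M) (P c : ℝ) (hP : 0 ≤ P) (hc : 1 ≤ c ^ 2) :
    let g : ℝ → ℝ := fun β =>
      (1 / 2) * Real.logb 2 (1 + (1 - β) * P / (1 + β * P + c ^ 2)) +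
        (1 / (2 * M)) * Real.logb 2 (1 + β * P)
    let h : ℝ → ℝ := fun x =>
      (1 / 2) * Real.logb 2 (1 + P + x) - (((M : ℝ) - 1) / (2 * M)) * Real.logb 2 x
    ∃ β ∈ Set.Icc (0 : ℝ) 1,
      sInf (h '' Set.Icc (1 : ℝ) (c ^ 2)) + 3 / 2 - 9 / 4 ≤ g β := by
  have hm : (2 : ℝ) ≤ M := by exact_mod_cast hM
  generalize (M : ℝ) = m at hm ⊢
  generalize c ^ 2 = s at hc ⊢
  intro g h
  have hm0 : m ≠ 0 := by linarith
  have hl2 : 0 < Real.log 2 := Real.log_pos (by norm_num)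
  -- Continuity on a compact interval makes the infimum genuine, hence at most any value of `h`.
  have hbdd : BddBelow (h '' Set.Icc 1 s) := by
    refine isCompact_Icc.bddBelow_image fun x hx => ContinuousAt.continuousWithinAt ?_
    have hx0 : x ≠ 0 := by linarith [hx.1]
    have hx1 : 1 + P + x ≠ 0 := by linarith [hx.1]
    simp only [h, Real.logb]
    fun_prop (disch := assumption)
  -- It suffices to exhibit `x` and `β` whose gap, in nats and doubled, is at most `log 2`.
  have key : ∀ x ∈ Set.Icc 1 s, ∀ β ∈ Set.Icc (0 : ℝ) 1,
      Real.log (1 + P + x) - (1 - 1 / m) * Real.log x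
        - (Real.log (1 + P + s) - Real.log (1 + β * P + s) + 1 / m * Real.log (1 + β * P))
        ≤ Real.log 2 →
      ∃ β ∈ Set.Icc (0 : ℝ) 1, sInf (h '' Set.Icc 1 s) + 3 / 2 - 9 / 4 ≤ g β := by
    intro x hx β hβ hgap
    refine ⟨β, hβ, ?_⟩
    have hle := csInf_le hbdd (Set.mem_image_of_mem h hx)
    have hβP : 0 ≤ β * P := mul_nonneg hβ.1 hP
    have hden : 0 < 1 + β * P + s := by linarith
    have hfrac : 1 + (1 - β) * P / (1 + β * P + s) = (1 + P + s) / (1 + β * P + s) := by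
      field_simp
      ring
    have hdiff : h x - g β = (Real.log (1 + P + x) - (1 - 1 / m) * Real.log x
        - (Real.log (1 + P + s) - Real.log (1 + β * P + s) + 1 / m * Real.log (1 + β * P)))
        / (2 * Real.log 2) := by
      simp only [h, g, Real.logb]
      rw [hfrac, Real.log_div (by linarith) hden.ne']
      field_simp
    have hhalf : h x - g β ≤ 1 / 2 := by
      rw [hdiff, div_le_iff₀ (by positivity)]
      linarith
    linarith
  have hent := gap_le_log_two (t := m - 1) (m := m) (by linarith) (by linarith)
  rw [add_sub_cancel] at hent
  have hm1 : 0 < m - 1 := by linarith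
  rcases le_or_gt ((m - 1) * (1 + P)) s with hs | hs
  · -- Strong state: no common codeword, and `h` is taken at its stationary point.
    refine key ((m - 1) * (1 + P)) ⟨by nlinarith, hs⟩ 1 ⟨by norm_num, le_rfl⟩ ?_
    have e1 : 1 + P + (m - 1) * (1 + P) = m * (1 + P) := by ring
    have hP1 : 1 + P ≠ 0 := by linarith
    rw [e1, Real.log_mul hm0 hP1, Real.log_mul hm1.ne' hP1, one_mul]
    linarith
  · rcases le_or_gt (m - 1) s with hs' | hs'
    · -- Here `P > 0`, and `β` solves `1 + β * P = s / (m - 1)`.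
      have hP0 : 0 < P := by nlinarith
      have hu1 : 1 ≤ s / (m - 1) := (one_le_div hm1).2 hs'
      have hu2 : s / (m - 1) ≤ 1 + P := by
        rw [div_le_iff₀ hm1]; linarith
      refine key s ⟨hc, le_rfl⟩ ((s / (m - 1) - 1) / P)
        ⟨div_nonneg (by linarith) hP, (div_le_one hP0).2 (by linarith)⟩ ?_
      have hs0 : s ≠ 0 := by linarith
      have e1 : 1 + (s / (m - 1) - 1) / P * P = s / (m - 1) := by
        rw [div_mul_cancel₀ _ hP0.ne']; ring
      have e2 : s / (m - 1) + s = m * s / (m - 1) := by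
        field_simp; ring
      rw [e1, e2, Real.log_div (mul_ne_zero hm0 hs0) hm1.ne', Real.log_mul hm0 hs0,
        Real.log_div hs0 hm1.ne']
      linarith
    · -- Weak state: no private codewords.
      refine key s ⟨hc, le_rfl⟩ 0 ⟨le_rfl, by norm_num⟩ ?_
      have := gap_le_log_two (t := s) (m := m) hc (by linarith)
      simp only [zero_mul, add_zero, Real.log_one, mul_zero]
      linarith
end
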